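/- Let R be a coherent commutative ring, 𝔗 a torsion theory over R, 𝔞 a finitely generated ideal of R, and M an R-module. Then 𝔗-Egrade_R(𝔞,M) = 𝔗-Hgrade_R(𝔞,M). -/

import Mathlib

open CategoryTheory

universe u

noncomputable section

/-- A torsion theory over `R`: a class of `R`-modules closed under isomorphism, submodules,
quotient modules, extensions, and directed colimits (formulated as closure under directed
unions of submodules). -/
structure IsTorsionTheory (R : Type u) [CommRing R] (T : Set (ModuleCat.{u} R)) : Prop where
  mem_of_iso : ∀ {N N' : ModuleCat.{u} R}, (N ≅ N') → N ∈ T → N' ∈ T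
  submodule_mem : ∀ {N : ModuleCat.{u} R}, N ∈ T → ∀ S : Submodule R N,
    ModuleCat.of R S ∈ T
  quotient_mem : ∀ {N : ModuleCat.{u} R}, N ∈ T → ∀ S : Submodule R N,
    ModuleCat.of R (N ⧸ S) ∈ T
  ext_mem : ∀ {N : ModuleCat.{u} R} (S : Submodule R N),
    ModuleCat.of R S ∈ T → ModuleCat.of R (N ⧸ S) ∈ T → N ∈ T
  directed_mem : ∀ {N : ModuleCat.{u} R} {ι : Type u} [Nonempty ι] (S : ι → Submodule R N),
    Directed (· ≤ ·) S → (∀ i, ModuleCat.of R (S i) ∈ T) → iSup S = ⊤ → N ∈ T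

variable {R : Type u} [CommRing R]

/-- A commutative ring is coherent if every finitely generated ideal is finitely presented. -/
def IsCoherentRing (R : Type u) [CommRing R] : Prop :=
  ∀ I : Ideal R, I.FG → Module.FinitePresentation R I

/-- The `𝔗`-Ext grade of `𝔞` on `M`: the infimum of the set of `i` such that
`Ext^i_R(R/𝔞, M) ∉ 𝔗` (with `inf ∅ = +∞`). -/
def TEgrade (T : Set (ModuleCat.{u} R)) (a : Ideal R) (M : Type u)
    [AddCommGroup M] [Module R M] : ℕ∞ :=
  sInf ((↑· : ℕ → ℕ∞) '' {i | ((Ext R (ModuleCat.{u} R) i).obj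
    (Opposite.op (ModuleCat.of R (R ⧸ a)))).obj (ModuleCat.of R M) ∉ T})

/-- The `𝔗`-local cohomology grade of `𝔞` on `M`: the infimum of the set of `i` such that
`H^i_𝔞(M) = colim_n Ext^i_R(R/𝔞ⁿ, M) ∉ 𝔗` (with `inf ∅ = +∞`). -/
def THgrade (T : Set (ModuleCat.{u} R)) (a : Ideal R) (M : Type u)
    [AddCommGroup M] [Module R M] : ℕ∞ :=
  sInf ((↑· : ℕ → ℕ∞) '' {i | (localCohomology a i).obj (ModuleCat.of R M) ∉ T})

/-- The map `Hom(Q, M) ⟶ Hom(P, M)` of complexes induced by a map `P ⟶ Q` of complexes. -/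
def linearYonedaObjMap {P Q : ChainComplex (ModuleCat.{u} R) ℕ} (φ : P ⟶ Q)
    (M : ModuleCat.{u} R) : Q.linearYonedaObj R M ⟶ P.linearYonedaObj R M :=
  (HomologicalComplex.unopFunctor _ _).map
    ((((linearYoneda R (ModuleCat.{u} R)).obj M).rightOp.mapHomologicalComplex _).map φ).op

lemma isoExt_inv_naturality {X X' : ModuleCat.{u} R} (g : X' ⟶ X) (P' : ProjectiveResolution X')
    (P : ProjectiveResolution X) (φ : P'.complex ⟶ P.complex)
    (comm : φ.f 0 ≫ P.π.f 0 = P'.π.f 0 ≫ g) (n : ℕ) (M : ModuleCat.{u} R) :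
    (P.isoExt (R := R) n M).inv ≫ ((Ext R (ModuleCat.{u} R) n).map g.op).app M =
      HomologicalComplex.homologyMap (linearYonedaObjMap φ M) n ≫ (P'.isoExt n M).inv := by
  have h := congrArg Quiver.Hom.unop (ProjectiveResolution.isoLeftDerivedObj_hom_naturality
    g P' P φ comm ((linearYoneda R (ModuleCat.{u} R)).obj M).rightOp n)
  have h2 := congrArg Quiver.Hom.unop
    (HomologicalComplex.homologyOp_hom_naturality (linearYonedaObjMap φ M) n)
  simp only [unop_comp] at h h2
  refine (Category.assoc ((P.complex.linearYonedaObj R M).homologyOp n).hom.unop _ _).trans ?_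
  refine (congrArg _ h).trans ?_
  refine (Category.assoc _ _ _).symm.trans ?_
  exact (congrArg (fun t => t ≫ (P'.isoLeftDerivedObj
    ((linearYoneda R (ModuleCat.{u} R)).obj M).rightOp n).hom.unop) h2).trans (Category.assoc _ _ _)

open Abelian in
lemma extMk_eq_zero_iff_prev {X M : ModuleCat.{u} R} (P : ProjectiveResolution X) {n : ℕ}
    (f : P.complex.X n ⟶ M) (hf : P.complex.d (n + 1) n ≫ f = 0) :
    P.extMk f (n + 1) rfl hf = 0 ↔
      ∃ g : P.complex.X ((ComplexShape.up ℕ).prev n) ⟶ M, P.complex.d n _ ≫ g = f := by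
  rcases n with _ | n
  · have hd : P.complex.d 0 ((ComplexShape.up ℕ).prev 0) = 0 :=
      P.complex.shape _ _ (by simp)
    simp only [hd, Limits.zero_comp, exists_const_iff]
    rw [← P.extEquivCohomologyClass.apply_eq_iff_eq,
      ProjectiveResolution.extEquivCohomologyClass_extMk,
      ProjectiveResolution.extEquivCohomologyClass_zero,
      CochainComplex.HomComplex.CohomologyClass.mk_eq_zero_iff,
      CochainComplex.HomComplex.Cocycle.toSingleMk_mem_coboundaries_iff _ _ _ _ _ 1 (by simp)]
    have hz : Limits.IsZero (P.cochainComplex.X 1) :=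
      P.cochainComplex.isZero_of_isStrictlyLE 0 1 (by simp)
    constructor
    · rintro ⟨g, hg⟩
      rw [hz.eq_of_src g 0, Limits.comp_zero] at hg
      refine ⟨⟨0⟩, ?_⟩
      rw [← cancel_epi (P.cochainComplexXIso (-(0 : ℕ)) 0 rfl).hom, ← hg, Limits.comp_zero]
    · rintro ⟨-, h⟩
      exact ⟨0, by rw [← h]; simp⟩
  · rw [P.extMk_eq_zero_iff f _ rfl hf n rfl, CochainComplex.prev_nat_succ]

section Cocycles

variable (K L : CochainComplex (ModuleCat.{u} R) ℕ) (n : ℕ)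

/-- The cocycles of a cochain complex of modules, as a submodule. -/
abbrev cocycles : Submodule R (K.X n) := LinearMap.ker (K.d n (n + 1)).hom

/-- The inclusion of the cocycles, lifted to the categorical cycles. -/
def cocyclesToCycles : ModuleCat.of R (cocycles K n) ⟶ K.cycles n :=
  K.liftCycles (ModuleCat.ofHom (cocycles K n).subtype) (n + 1) (by simp) (by ext x; exact x.2)

lemma iCycles_cocyclesToCycles (z : cocycles K n) :
    K.iCycles n (cocyclesToCycles K n z) = z.1 :=
  ConcreteCategory.congr_hom (K.liftCycles_i (ModuleCat.ofHom (cocycles K n).subtype) (n + 1)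
    (by simp) (by ext x; exact x.2)) z

lemma iCycles_injective : Function.Injective (K.iCycles n) :=
  (ModuleCat.mono_iff_injective _).1 inferInstance

lemma cocyclesToCycles_surjective : Function.Surjective (cocyclesToCycles K n) := fun y =>
  ⟨⟨K.iCycles n y, ConcreteCategory.congr_hom (K.iCycles_d n (n + 1)) y⟩,
    iCycles_injective K n (iCycles_cocyclesToCycles K n _)⟩

/-- The map sending a cocycle to its class in homology. -/
def cocyclesToHomology : ModuleCat.of R (cocycles K n) ⟶ K.homology n :=
  cocyclesToCycles K n ≫ K.homologyπ n

lemma cocyclesToHomology_surjective : Function.Surjective (cocyclesToHomology K n) :=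
  ((ModuleCat.epi_iff_surjective (K.homologyπ n)).1 inferInstance).comp
    (cocyclesToCycles_surjective K n)

lemma cocyclesToHomology_eq_zero_iff (z : cocycles K n) :
    cocyclesToHomology K n z = 0 ↔
      ∃ y : K.X ((ComplexShape.up ℕ).prev n), K.d ((ComplexShape.up ℕ).prev n) n y = z.1 := by
  have hex := (ShortComplex.moduleCat_exact_iff _).1 (ShortComplex.exact_of_g_is_cokernel
    (ShortComplex.mk _ _ (K.toCycles_comp_homologyπ _ n)) (K.homologyIsCokernel _ n rfl))
  have hto : ∀ y, K.iCycles n (K.toCycles ((ComplexShape.up ℕ).prev n) n y) =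
      K.d ((ComplexShape.up ℕ).prev n) n y := fun y =>
    ConcreteCategory.congr_hom (K.toCycles_i ((ComplexShape.up ℕ).prev n) n) y
  constructor
  · intro h
    obtain ⟨y, hy⟩ := hex _ h
    exact ⟨y, (hto y).symm.trans ((congrArg (K.iCycles n) hy).trans
      (iCycles_cocyclesToCycles K n z))⟩
  · rintro ⟨y, hy⟩
    have : K.toCycles ((ComplexShape.up ℕ).prev n) n y = cocyclesToCycles K n z :=
      iCycles_injective K n ((hto y).trans (hy.trans (iCycles_cocyclesToCycles K n z).symm))
    exact (congrArg (K.homologyπ n) this).symm.trans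
      (ConcreteCategory.congr_hom (K.toCycles_comp_homologyπ ((ComplexShape.up ℕ).prev n) n) y)

variable {K L}

lemma homologyMap_cocyclesToHomology (f : K ⟶ L) (z : cocycles K n) (w : cocycles L n)
    (h : f.f n z.1 = w.1) :
    HomologicalComplex.homologyMap f n (cocyclesToHomology K n z) = cocyclesToHomology L n w := by
  have h1 : HomologicalComplex.cyclesMap f n (cocyclesToCycles K n z) = cocyclesToCycles L n w := by
    refine iCycles_injective L n ?_
    refine (ConcreteCategory.congr_hom (HomologicalComplex.cyclesMap_i f n) _).trans ?_
    exact (congrArg (f.f n) (iCycles_cocyclesToCycles K n z)).trans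
      (h.trans (iCycles_cocyclesToCycles L n w).symm)
  exact (ConcreteCategory.congr_hom (HomologicalComplex.homologyπ_naturality f n) _).trans
    (congrArg (L.homologyπ n) h1)

end Cocycles

section Comparison

variable {X : ModuleCat.{u} R} (P : ProjectiveResolution X) (M : ModuleCat.{u} R) (n : ℕ)

/-- The class in `Ext` of a cocycle of the complex `Hom(P, M)`. -/
def cocyclesToExt : ModuleCat.of R (cocycles (P.complex.linearYonedaObj R M) n) ⟶
    ((Ext R (ModuleCat.{u} R) n).obj (Opposite.op X)).obj M :=
  cocyclesToHomology (P.complex.linearYonedaObj R M) n ≫ (P.isoExt n M).inv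

lemma cocyclesToExt_surjective : Function.Surjective (cocyclesToExt P M n) :=
  ((ModuleCat.epi_iff_surjective (P.isoExt (R := R) n M).inv).1 inferInstance).comp
    (cocyclesToHomology_surjective _ n)

lemma cocyclesToExt_eq_zero_iff (z : cocycles (P.complex.linearYonedaObj R M) n) :
    cocyclesToExt P M n z = 0 ↔
      ∃ g : P.complex.X ((ComplexShape.up ℕ).prev n) ⟶ M, P.complex.d n _ ≫ g = z.1 :=
  (map_eq_zero_iff (P.isoExt (R := R) n M).inv.hom
    ((ModuleCat.mono_iff_injective (P.isoExt (R := R) n M).inv).1 inferInstance)).trans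
    (cocyclesToHomology_eq_zero_iff _ n z)

open Abelian in
lemma smul_extMk (r : R) (f : P.complex.X n ⟶ M) (hf : P.complex.d (n + 1) n ≫ f = 0)
    (hf' : P.complex.d (n + 1) n ≫ (r • f) = 0) :
    P.extMk (r • f) (n + 1) rfl hf' = r • P.extMk f (n + 1) rfl hf := by
  rw [Ext.smul_eq_comp_mk₀, P.extMk_comp_mk₀]
  simp

/-- The class in the derived category `Ext` of a cocycle of the complex `Hom(P, M)`. -/
def cocyclesToAbelianExt :
    cocycles (P.complex.linearYonedaObj R M) n →ₗ[R] Abelian.Ext.{u} X M n where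
  toFun z := P.extMk z.1 (n + 1) rfl z.2
  map_add' _ _ := (P.add_extMk _ _ _ rfl _ _).symm
  map_smul' r x := smul_extMk P M n r x.1 x.2 _

lemma cocyclesToAbelianExt_surjective :
    Function.Surjective (cocyclesToAbelianExt P M n) := fun x => by
  obtain ⟨f, hf, rfl⟩ := P.extMk_surjective x (n + 1) rfl
  exact ⟨⟨f, hf⟩, rfl⟩

lemma ker_cocyclesToExt : LinearMap.ker (cocyclesToExt P M n).hom =
    LinearMap.ker (cocyclesToAbelianExt P M n) :=
  SetLike.ext fun z => (cocyclesToExt_eq_zero_iff P M n z).trans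
    (extMk_eq_zero_iff_prev P z.1 z.2).symm

/-- The comparison between `Ext` computed by left derived functors and `Ext` in the derived
category. -/
def extLinearEquiv : ((Ext R (ModuleCat.{u} R) n).obj (Opposite.op X)).obj M ≃ₗ[R]
    Abelian.Ext.{u} X M n :=
  ((cocyclesToExt P M n).hom.quotKerEquivOfSurjective (cocyclesToExt_surjective P M n)).symm ≪≫ₗ
    Submodule.quotEquivOfEq _ _ (ker_cocyclesToExt P M n) ≪≫ₗ
    (cocyclesToAbelianExt P M n).quotKerEquivOfSurjective (cocyclesToAbelianExt_surjective P M n)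

lemma extLinearEquiv_apply (z : cocycles (P.complex.linearYonedaObj R M) n) :
    extLinearEquiv P M n (cocyclesToExt P M n z) = cocyclesToAbelianExt P M n z := by
  have : ((cocyclesToExt P M n).hom.quotKerEquivOfSurjective
      (cocyclesToExt_surjective P M n)).symm (cocyclesToExt P M n z) =
      Submodule.Quotient.mk z := by
    rw [LinearEquiv.symm_apply_eq]; rfl
  simp only [extLinearEquiv, LinearEquiv.trans_apply, this]
  rfl

lemma d_comp_hom_comp_eq_zero {P Q : ChainComplex (ModuleCat.{u} R) ℕ} (φ : P ⟶ Q) {n : ℕ}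
    {M : ModuleCat.{u} R} (f : Q.X n ⟶ M) (hf : Q.d (n + 1) n ≫ f = 0) :
    P.d (n + 1) n ≫ φ.f n ≫ f = 0 := by
  rw [← φ.comm_assoc, hf, Limits.comp_zero]

lemma extLinearEquiv_naturality {X' : ModuleCat.{u} R} (P' : ProjectiveResolution X') (g : X' ⟶ X)
    (x : ((Ext R (ModuleCat.{u} R) n).obj (Opposite.op X)).obj M) :
    extLinearEquiv P' M n (((Ext R (ModuleCat.{u} R) n).map g.op).app M x) =
      (Abelian.Ext.mk₀ g).comp (extLinearEquiv P M n x) (zero_add n) := by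
  let φ : ProjectiveResolution.Hom P' P g :=
    { hom := ProjectiveResolution.lift g P' P
      hom_f_zero_comp_π_f_zero :=
        congrArg (fun t => t.f 0) (ProjectiveResolution.lift_commutes g P' P) }
  obtain ⟨z, rfl⟩ := cocyclesToExt_surjective P M n x
  let w : cocycles (P'.complex.linearYonedaObj R M) n :=
    ⟨(linearYonedaObjMap φ.hom M).f n z.1, d_comp_hom_comp_eq_zero φ.hom z.1 z.2⟩
  have key : ((Ext R (ModuleCat.{u} R) n).map g.op).app M (cocyclesToExt P M n z) =
      cocyclesToExt P' M n w :=
    (ConcreteCategory.congr_hom (isoExt_inv_naturality g P' P φ.hom φ.hom_f_zero_comp_π_f_zero n M)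
      (cocyclesToHomology (P.complex.linearYonedaObj R M) n z)).trans
      (congrArg (P'.isoExt (R := R) n M).inv
        (homologyMap_cocyclesToHomology n (linearYonedaObjMap φ.hom M) z w rfl))
  rw [key, extLinearEquiv_apply, extLinearEquiv_apply]
  exact (ProjectiveResolution.mk₀_comp_extMk z.1 (n + 1) rfl z.2 φ).symm

end Comparison

namespace IsTorsionTheory

variable {T : Set (ModuleCat.{u} R)} (hT : IsTorsionTheory R T)
include hT

section Modules

variable {A B C : Type u} [AddCommGroup A] [Module R A] [AddCommGroup B] [Module R B]
  [AddCommGroup C] [Module R C]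

lemma mem_of_linearEquiv (e : A ≃ₗ[R] B) (hA : ModuleCat.of R A ∈ T) : ModuleCat.of R B ∈ T :=
  hT.mem_of_iso e.toModuleIso hA

lemma mem_of_injective (f : A →ₗ[R] B) (hf : Function.Injective f) (hB : ModuleCat.of R B ∈ T) :
    ModuleCat.of R A ∈ T :=
  hT.mem_of_linearEquiv (LinearEquiv.ofInjective f hf).symm
    (hT.submodule_mem hB (LinearMap.range f))

lemma mem_of_surjective (f : A →ₗ[R] B) (hf : Function.Surjective f)
    (hA : ModuleCat.of R A ∈ T) : ModuleCat.of R B ∈ T :=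
  hT.mem_of_linearEquiv (f.quotKerEquivOfSurjective hf) (hT.quotient_mem hA (LinearMap.ker f))

lemma range_mem (f : A →ₗ[R] B) (hA : ModuleCat.of R A ∈ T) :
    ModuleCat.of R (LinearMap.range f) ∈ T :=
  hT.mem_of_surjective f.rangeRestrict f.surjective_rangeRestrict hA

lemma mem_of_exact (f : A →ₗ[R] B) (g : B →ₗ[R] C) (h : Function.Exact f g)
    (hA : ModuleCat.of R A ∈ T) (hC : ModuleCat.of R C ∈ T) : ModuleCat.of R B ∈ T := by
  refine hT.ext_mem (N := ModuleCat.of R B) (LinearMap.range f) (hT.range_mem f hA) ?_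
  refine hT.mem_of_injective ((LinearMap.range f).liftQ g ?_) ?_ hC
  · rintro _ ⟨x, rfl⟩
    exact h.apply_apply_eq_zero x
  · rw [← LinearMap.ker_eq_bot, Submodule.ker_liftQ_eq_bot]
    exact fun x hx => (h x).1 hx

lemma mem_of_subsingleton (hne : T.Nonempty) [Subsingleton A] : ModuleCat.of R A ∈ T := by
  obtain ⟨N, hN⟩ := hne
  exact hT.mem_of_injective (B := N) 0 (Function.injective_of_subsingleton _) hN

lemma pi_mem (hA : ModuleCat.of R A ∈ T) (m : ℕ) : ModuleCat.of R (Fin m → A) ∈ T := by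
  induction m with
  | zero => exact hT.mem_of_subsingleton ⟨_, hA⟩
  | succ m ih =>
    refine hT.mem_of_exact (LinearMap.single R (fun _ : Fin (m + 1) => A) 0)
      (LinearMap.funLeft R A Fin.succ) (fun y => ⟨fun hy => ⟨y 0, ?_⟩, ?_⟩) hA ih
    · ext i
      refine Fin.cases (by simp) (fun i => ?_) i
      simpa using (congrFun hy i).symm
    · rintro ⟨x, rfl⟩
      ext i
      simp [LinearMap.funLeft_apply]

lemma mem_of_monotone (S : ℕ → Submodule R A) (hS : Monotone S)
    (h : ∀ k, ModuleCat.of R (S k) ∈ T) (htop : ∀ x, ∃ k, x ∈ S k) : ModuleCat.of R A ∈ T := by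
  refine hT.directed_mem (N := ModuleCat.of R A) (ι := ULift.{u} ℕ) (fun i => S i.down)
    (fun i j => ⟨⟨max i.down j.down⟩, hS (le_max_left _ _), hS (le_max_right _ _)⟩)
    (fun i => h i.down) (eq_top_iff.2 fun x _ => ?_)
  obtain ⟨k, hk⟩ := htop x
  exact Submodule.mem_iSup_of_mem (⟨k⟩ : ULift.{u} ℕ) hk

end Modules

end IsTorsionTheory

section Colimits

open Limits

variable {J : Type} [SmallCategory J]

instance [IsFiltered J] : PreservesColimitsOfShape J (forget (ModuleCat.{u} R)) :=
  (preservesFilteredColimitsOfSize_of_univLE.{u, u, 0, 0}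
    (forget (ModuleCat.{u} R))).preserves_filtered_colimits J

variable {A B C : J ⥤ ModuleCat.{u} R}

lemma exists_colimit_ι_eq [IsFiltered J] (x : (colimit A : ModuleCat.{u} R)) :
    ∃ (j : J) (a : A.obj j), colimit.ι A j a = x :=
  Concrete.colimit_exists_rep A x

lemma colimit_ι_map_apply {j k : J} (f : j ⟶ k) (a : A.obj j) :
    colimit.ι A k (A.map f a) = colimit.ι A j a :=
  ConcreteCategory.congr_hom (colimit.w A f) a

lemma colimMap_ι_apply (f : A ⟶ B) {j : J} (a : A.obj j) :
    colimMap f (colimit.ι A j a) = colimit.ι B j (f.app j a) :=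
  ConcreteCategory.congr_hom (ι_colimMap f j) a

variable [IsFiltered J]

lemma exists_map_eq_zero_of_colimit_ι_eq_zero {j : J} (a : A.obj j)
    (h : colimit.ι A j a = 0) : ∃ (k : J) (f : j ⟶ k), A.map f a = 0 := by
  obtain ⟨k, f, g, hfg⟩ := (Concrete.colimit_rep_eq_iff_exists A a (0 : A.obj j)).1
    (h.trans (map_zero _).symm)
  exact ⟨k, f, hfg.trans (map_zero _)⟩

lemma colimMap_exact (f : A ⟶ B) (g : B ⟶ C) (h : ∀ j, Function.Exact (f.app j) (g.app j)) :
    Function.Exact (colimMap f) (colimMap g) := by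
  intro y
  obtain ⟨j, b, rfl⟩ := exists_colimit_ι_eq y
  constructor
  · intro hy
    rw [colimMap_ι_apply] at hy
    obtain ⟨k, t, ht⟩ := exists_map_eq_zero_of_colimit_ι_eq_zero _ hy
    obtain ⟨a, ha⟩ := (h k (B.map t b)).1 ((ConcreteCategory.congr_hom (g.naturality t) b).trans ht)
    exact ⟨colimit.ι A k a, by rw [colimMap_ι_apply, ha, colimit_ι_map_apply]⟩
  · rintro ⟨x, hx⟩
    obtain ⟨k, a, rfl⟩ := exists_colimit_ι_eq x
    rw [← hx, colimMap_ι_apply, colimMap_ι_apply, (h k).apply_apply_eq_zero, map_zero]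

lemma colimMap_injective (f : A ⟶ B) (h : ∀ j, Function.Injective (f.app j)) :
    Function.Injective (colimMap f) := by
  refine (injective_iff_map_eq_zero (colimMap f).hom).2 fun x hx => ?_
  obtain ⟨j, a, rfl⟩ := exists_colimit_ι_eq x
  have hx' : colimit.ι B j (f.app j a) = 0 := (colimMap_ι_apply f a).symm.trans hx
  obtain ⟨k, t, ht⟩ := exists_map_eq_zero_of_colimit_ι_eq_zero _ hx'
  have : A.map t a = 0 := h k
    ((ConcreteCategory.congr_hom (f.naturality t) a).trans (ht.trans (map_zero _).symm))
  rw [← colimit_ι_map_apply t, this, map_zero]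

lemma colimit_ι_injective (h : ∀ {j k : J} (f : j ⟶ k), Function.Injective (A.map f)) (j : J) :
    Function.Injective (colimit.ι A j) := by
  refine (injective_iff_map_eq_zero (colimit.ι A j).hom).2 fun x hx => ?_
  obtain ⟨k, f, hf⟩ := exists_map_eq_zero_of_colimit_ι_eq_zero _ hx
  exact h f (hf.trans (map_zero _).symm)

lemma IsTorsionTheory.colimit_mem {T : Set (ModuleCat.{u} R)} (hT : IsTorsionTheory R T)
    (h : ∀ j, A.obj j ∈ T) : colimit A ∈ T := by
  have := IsFiltered.nonempty (C := J)
  refine hT.directed_mem (ι := ULift.{u} J)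
    (fun j => LinearMap.range (colimit.ι A j.down).hom) (fun i j => ?_)
    (fun j => hT.range_mem _ (h j.down)) (eq_top_iff.2 fun x _ => ?_)
  · have key : ∀ {i k : J} (f : i ⟶ k), LinearMap.range (colimit.ι A i).hom ≤
        LinearMap.range (colimit.ι A k).hom := by
      rintro i k f _ ⟨x, rfl⟩
      exact ⟨A.map f x, colimit_ι_map_apply f x⟩
    exact ⟨⟨IsFiltered.max i.down j.down⟩, key (IsFiltered.leftToMax _ _),
      key (IsFiltered.rightToMax _ _)⟩
  · obtain ⟨j, a, rfl⟩ := exists_colimit_ι_eq x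
    exact Submodule.mem_iSup_of_mem (⟨j⟩ : ULift.{u} J) ⟨a, rfl⟩

end Colimits

section ExtColimit

open Limits Abelian

variable {D : Type} [SmallCategory D] (F : D ⥤ ModuleCat.{u} R)

lemma comp_comp_eq_zero {X Y Z W : ModuleCat.{u} R} {n m p n' p' q : ℕ} (x : Ext.{u} X Y n)
    {β : Ext.{u} Y Z m} {γ : Ext.{u} Z W p} {hq : m + p = q} (hβγ : β.comp γ hq = 0)
    (h : n + m = n') (h' : n' + p = p') : (x.comp β h).comp γ h' = 0 := by
  rw [Ext.comp_assoc x β γ h hq (by lia), hβγ, Ext.comp_zero]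

/-- The diagram `j ↦ Ext^n(F j, M)`. -/
def extDiagram (n : ℕ) (M : ModuleCat.{u} R) : Dᵒᵖ ⥤ ModuleCat.{u} R where
  obj j := ModuleCat.of R (Ext.{u} (F.obj j.unop) M n)
  map f := ModuleCat.ofHom ((Ext.mk₀ (F.map f.unop)).precompOfLinear R M (zero_add n))
  map_id j := by
    ext x
    simp
  map_comp f g := by
    ext x
    change (Ext.mk₀ (F.map (f ≫ g).unop)).comp x (zero_add n) =
      (Ext.mk₀ (F.map g.unop)).comp ((Ext.mk₀ (F.map f.unop)).comp x (zero_add n)) (zero_add n)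
    rw [unop_comp, F.map_comp, Ext.mk₀_comp_mk₀_assoc]

/-- Postcomposition with an `Ext` class, as a morphism of diagrams. -/
def extDiagramMap {M N : ModuleCat.{u} R} {n m n' : ℕ} (β : Ext.{u} M N m) (h : n + m = n') :
    extDiagram F n M ⟶ extDiagram F n' N where
  app j := ModuleCat.ofHom (β.postcompOfLinear R (F.obj j.unop) h)
  naturality j k f := by
    ext x
    exact Ext.comp_assoc (Ext.mk₀ (F.map f.unop)) x β (zero_add n) h (by lia)

/-- The colimit of the modules `Ext^n(F j, M)`. -/
abbrev extColimit (n : ℕ) (M : ModuleCat.{u} R) : ModuleCat.{u} R := colimit (extDiagram F n M)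

variable [IsFiltered Dᵒᵖ] {T : Set (ModuleCat.{u} R)} (hT : IsTorsionTheory R T)
  {S : ShortComplex (ModuleCat.{u} R)} (hS : S.ShortExact)
include hT hS

lemma extColimit_mem_X₂ {n : ℕ} (h₁ : extColimit F n S.X₁ ∈ T) (h₃ : extColimit F n S.X₃ ∈ T) :
    extColimit F n S.X₂ ∈ T :=
  hT.mem_of_exact _ _ (colimMap_exact (extDiagramMap F (Ext.mk₀ S.f) (add_zero n))
    (extDiagramMap F (Ext.mk₀ S.g) (add_zero n)) fun j x =>
      ⟨Ext.covariant_sequence_exact₂ (F.obj j.unop) hS x, by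
        rintro ⟨y, rfl⟩
        exact comp_comp_eq_zero y (by simp : (Ext.mk₀ S.f).comp (Ext.mk₀ S.g) (add_zero 0) = 0)
          (add_zero n) (add_zero n)⟩) h₁ h₃

lemma extColimit_mem_X₃ {n : ℕ} (h₂ : extColimit F n S.X₂ ∈ T)
    (h₁ : extColimit F (n + 1) S.X₁ ∈ T) : extColimit F n S.X₃ ∈ T :=
  hT.mem_of_exact _ _ (colimMap_exact (extDiagramMap F (Ext.mk₀ S.g) (add_zero n))
    (extDiagramMap F hS.extClass (Eq.refl (n + 1))) fun j x =>
      ⟨Ext.covariant_sequence_exact₃ (F.obj j.unop) hS x rfl, by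
        rintro ⟨y, rfl⟩
        exact comp_comp_eq_zero y hS.comp_extClass
          (add_zero n) (Eq.refl (n + 1))⟩) h₂ h₁

lemma extColimit_mem_X₁ {n : ℕ} (h₃ : extColimit F n S.X₃ ∈ T)
    (h₂ : extColimit F (n + 1) S.X₂ ∈ T) : extColimit F (n + 1) S.X₁ ∈ T :=
  hT.mem_of_exact _ _ (colimMap_exact (extDiagramMap F hS.extClass (Eq.refl (n + 1)))
    (extDiagramMap F (Ext.mk₀ S.f) (add_zero (n + 1))) fun j x =>
      ⟨fun hx => Ext.covariant_sequence_exact₁ (F.obj j.unop) hS x hx rfl, by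
        rintro ⟨y, rfl⟩
        exact comp_comp_eq_zero y hS.extClass_comp
          (Eq.refl (n + 1)) (add_zero (n + 1))⟩) h₃ h₂

lemma extColimit_zero_mem_X₁ (h₂ : extColimit F 0 S.X₂ ∈ T) : extColimit F 0 S.X₁ ∈ T :=
  hT.mem_of_injective _ (colimMap_injective (extDiagramMap F (Ext.mk₀ S.f) (add_zero 0)) fun j =>
    have := hS.mono_f
    Ext.postcomp_mk₀_injective_of_mono (F.obj j.unop) S.f) h₂

end ExtColimit

section Coherent

lemma IsCoherentRing.finitePresentation_of_injective (hR : IsCoherentRing R) {m : ℕ}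
    {K : Type u} [AddCommGroup K] [Module R K] [Module.Finite R K]
    (f : K →ₗ[R] (Fin m → R)) (hf : Function.Injective f) : Module.FinitePresentation R K := by
  induction m generalizing K with
  | zero =>
    have : Subsingleton K := hf.subsingleton
    infer_instance
  | succ m ih =>
    let p : K →ₗ[R] R := LinearMap.proj 0 ∘ₗ f
    have hp : Module.FinitePresentation R (LinearMap.range p) :=
      hR _ ((Submodule.fg_top _).1 (Module.Finite.fg_top (R := R) (M := LinearMap.range p)))
    have hfg := Module.FinitePresentation.fg_ker p.rangeRestrict p.surjective_rangeRestrict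
    rw [LinearMap.ker_rangeRestrict] at hfg
    have : Module.Finite R (LinearMap.ker p) := Module.Finite.iff_fg.2 hfg
    have hk : Module.FinitePresentation R (LinearMap.ker p) := by
      refine ih (LinearMap.funLeft R R Fin.succ ∘ₗ f ∘ₗ (LinearMap.ker p).subtype) ?_
      refine (injective_iff_map_eq_zero _).2 fun x hx => ?_
      refine Subtype.ext (hf ?_)
      rw [Submodule.coe_zero, map_zero]
      ext i
      exact Fin.cases x.2 (fun i => congrFun hx i) i
    rw [← LinearMap.ker_rangeRestrict] at hk
    exact Module.finitePresentation_of_ker p.rangeRestrict p.surjective_rangeRestrict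

open Abelian in
lemma ext_mem_of_finitePresentation (hR : IsCoherentRing R) {T : Set (ModuleCat.{u} R)}
    (hT : IsTorsionTheory R T) {N : ModuleCat.{u} R} (hN : N ∈ T) (n : ℕ) (X : ModuleCat.{u} R)
    [Module.FinitePresentation R X] : ModuleCat.of R (Ext.{u} X N n) ∈ T := by
  induction n generalizing X with
  | zero =>
    obtain ⟨m, f, hf⟩ := Module.Finite.exists_fin' R X
    refine hT.mem_of_linearEquiv (Ext.linearEquiv₀.trans ModuleCat.homLinearEquiv).symm
      (hT.mem_of_injective (B := Fin m → N)
        (LinearMap.pi fun i => LinearMap.applyₗ (f (Pi.single i 1))) ?_ (hT.pi_mem hN m))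
    refine fun g h hgh => ?_
    have : g ∘ₗ f = h ∘ₗ f := LinearMap.pi_ext' fun i => LinearMap.ext_ring (congrFun hgh i)
    exact (LinearMap.cancel_right hf).1 this
  | succ n ih =>
    obtain ⟨m, f, hf⟩ := Module.Finite.exists_fin' R X
    have : Module.Finite R (LinearMap.ker f) :=
      Module.Finite.iff_fg.2 (Module.FinitePresentation.fg_ker f hf)
    have := hR.finitePresentation_of_injective (LinearMap.ker f).subtype Subtype.val_injective
    have hS := LinearMap.shortExact_shortComplexKer hf
    have : Module.FinitePresentation R (f.shortComplexKer).X₁ := this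
    exact hT.mem_of_surjective (hS.extClass.precompOfLinear R N (add_comm 1 n))
      (precomp_extClass_surjective_of_projective_X₂ N hS n)
      (ih (f.shortComplexKer).X₁)

end Coherent

section Localization

variable {T : Set (ModuleCat.{u} R)} (hT : IsTorsionTheory R T) {a : Ideal R} {m : ℕ}
  {x : Fin m → R}

include hT in
lemma torsionBySet_pow_mem (hx : Ideal.span (Set.range x) = a) {N : Type u} [AddCommGroup N]
    [Module R N] (h : ModuleCat.of R (Submodule.torsionBySet R N (a : Set R)) ∈ T) (k : ℕ) :
    ModuleCat.of R (Submodule.torsionBySet R N ((a ^ k : Ideal R) : Set R)) ∈ T := by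
  induction k with
  | zero =>
    have : Subsingleton (Submodule.torsionBySet R N ((a ^ 0 : Ideal R) : Set R)) := by
      rw [pow_zero, Ideal.one_eq_top]
      refine ⟨fun y z => Subtype.ext ?_⟩
      have h0 : ∀ w : Submodule.torsionBySet R N ((⊤ : Ideal R) : Set R), w.1 = 0 := fun w =>
        (one_smul R w.1).symm.trans ((Submodule.mem_torsionBySet_iff _ _).1 w.2 ⟨1, trivial⟩)
      rw [h0 y, h0 z]
    exact hT.mem_of_subsingleton ⟨_, h⟩
  | succ k ih =>
    have hxa : ∀ i, x i ∈ a := fun i => hx ▸ Ideal.subset_span ⟨i, rfl⟩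
    let f : Submodule.torsionBySet R N ((a ^ (k + 1) : Ideal R) : Set R) →ₗ[R]
        (Fin m → Submodule.torsionBySet R N ((a ^ k : Ideal R) : Set R)) :=
      LinearMap.pi fun i => LinearMap.codRestrict _
        (x i • (Submodule.torsionBySet R N ((a ^ (k + 1) : Ideal R) : Set R)).subtype) fun y => by
          refine (Submodule.mem_torsionBySet_iff _ _).2 fun r => ?_
          have := (Submodule.mem_torsionBySet_iff _ _).1 y.2
            ⟨r.1 * x i, by rw [pow_succ]; exact Ideal.mul_mem_mul r.2 (hxa i)⟩
          exact (mul_smul _ _ _).symm.trans this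
    refine hT.mem_of_exact (LinearMap.ker f).subtype f (LinearMap.exact_subtype_ker_map f) ?_
      (hT.pi_mem ih m)
    refine hT.mem_of_injective (LinearMap.codRestrict _
      ((Submodule.torsionBySet R N ((a ^ (k + 1) : Ideal R) : Set R)).subtype ∘ₗ
        (LinearMap.ker f).subtype) fun y => ?_) (fun y z hyz => ?_) h
    · rw [Submodule.mem_torsionBySet_iff]
      rintro ⟨r, hr⟩
      have hle : a ≤ LinearMap.ker (LinearMap.toSpanSingleton R N y.1.1) := by
        refine hx.symm.le.trans (Ideal.span_le.2 ?_)
        rintro _ ⟨i, rfl⟩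
        exact congrArg Subtype.val (congrFun y.2 i)
      exact hle hr
    · have := congrArg Subtype.val hyz
      exact Subtype.ext (Subtype.ext this)

include hT in
lemma mem_of_forall_exists_pow (hx : Ideal.span (Set.range x) = a) {N : Type u} [AddCommGroup N]
    [Module R N] (h : ModuleCat.of R (Submodule.torsionBySet R N (a : Set R)) ∈ T)
    (hN : ∀ y : N, ∃ k, y ∈ Submodule.torsionBySet R N ((a ^ k : Ideal R) : Set R)) :
    ModuleCat.of R N ∈ T :=
  hT.mem_of_monotone (fun k => Submodule.torsionBySet R N ((a ^ k : Ideal R) : Set R))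
    (fun _ _ hkl => Submodule.torsionBySet_le_torsionBySet_of_subset (Ideal.pow_le_pow_right hkl))
    (torsionBySet_pow_mem hT hx h) hN

variable (x) (M : Type u) [AddCommGroup M] [Module R M]

/-- The product of the localizations of `M` away from the members of a finite family. -/
abbrev LocalizationPi : Type u := ∀ i, LocalizedModule (Submonoid.powers (x i)) M

/-- The canonical map from `M` to the product of its localizations. -/
def toLocalizationPi : M →ₗ[R] LocalizationPi x M :=
  LinearMap.pi fun i => LocalizedModule.mkLinearMap (Submonoid.powers (x i)) M

variable {x M}

include hT in
lemma ker_toLocalizationPi_mem (hx : Ideal.span (Set.range x) = a)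
    (h : ModuleCat.of R (Submodule.torsionBySet R M (a : Set R)) ∈ T) :
    ModuleCat.of R (LinearMap.ker (toLocalizationPi x M)) ∈ T := by
  refine mem_of_forall_exists_pow hT hx (hT.mem_of_injective (LinearMap.codRestrict
    (Submodule.torsionBySet R M (a : Set R))
    ((LinearMap.ker (toLocalizationPi x M)).subtype ∘ₗ Submodule.subtype _) fun y => ?_)
    (fun y z hyz => ?_) h) fun y => ?_
  · rw [Submodule.mem_torsionBySet_iff]
    exact fun r => congrArg Subtype.val ((Submodule.mem_torsionBySet_iff _ _).1 y.2 r)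
  · have := congrArg Subtype.val hyz
    exact Subtype.ext (Subtype.ext this)
  · have hle : a ≤ Ideal.radical (LinearMap.ker (LinearMap.toSpanSingleton R M y.1)) := by
      rw [← hx, Ideal.span_le]
      rintro _ ⟨i, rfl⟩
      obtain ⟨⟨_, k, rfl⟩, hk⟩ := (IsLocalizedModule.eq_zero_iff (Submonoid.powers (x i))
        (LocalizedModule.mkLinearMap (Submonoid.powers (x i)) M)).1 (congrFun y.2 i)
      exact ⟨k, hk⟩
    obtain ⟨k, hk⟩ := Ideal.exists_pow_le_of_le_radical_of_fg hle
      (hx ▸ Submodule.fg_span (Set.finite_range x) : a.FG)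
    refine ⟨k, (Submodule.mem_torsionBySet_iff _ _).2 fun r => Subtype.ext ?_⟩
    exact hk r.2

open Abelian

lemma ext_eq_zero_of_isUnit {X N : ModuleCat.{u} R} {n : ℕ} (r : R) (hX : ∀ y : X, r • y = 0)
    (hN : IsUnit (algebraMap R (Module.End R N) r)) (e : Ext.{u} X N n) : e = 0 := by
  have h0 : r • e = 0 := by
    rw [← Ext.mk₀_id_comp e, ← Ext.smul_comp, ← Ext.mk₀_smul]
    have : r • 𝟙 X = 0 := by
      ext y
      exact hX y
    rw [this, Ext.mk₀_zero, Ext.zero_comp]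
  obtain ⟨φ, hφ⟩ := hN.exists_right_inv
  have h1 : ModuleCat.ofHom φ ≫ (r • 𝟙 N) = 𝟙 N := by
    ext y
    exact LinearMap.congr_fun hφ y
  have h2 : (r • e.comp (Ext.mk₀ (ModuleCat.ofHom φ)) (add_zero n)) = e := by
    rw [Ext.smul_eq_comp_mk₀, Ext.comp_assoc_of_third_deg_zero, Ext.mk₀_comp_mk₀, h1,
      Ext.comp_mk₀_id]
  rw [← h2, ← Ext.smul_comp, h0, Ext.zero_comp]

lemma ext_localizationPi_eq_zero (hx : ∀ i, x i ∈ a) {X : ModuleCat.{u} R} {k : ℕ}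
    (hX : ∀ r ∈ a ^ k, ∀ y : X, r • y = 0) {n : ℕ}
    (e : Ext.{u} X (ModuleCat.of R (LocalizationPi x M)) n) : e = 0 := by
  let p (i : Fin m) : ModuleCat.of R (LocalizationPi x M) ⟶
      ModuleCat.of R (LocalizedModule (Submonoid.powers (x i)) M) :=
    ModuleCat.ofHom (LinearMap.proj i)
  let q (i : Fin m) : ModuleCat.of R (LocalizedModule (Submonoid.powers (x i)) M) ⟶
      ModuleCat.of R (LocalizationPi x M) :=
    ModuleCat.ofHom (LinearMap.single R (fun i => LocalizedModule (Submonoid.powers (x i)) M) i)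
  have hid : 𝟙 (ModuleCat.of R (LocalizationPi x M)) = ∑ i, p i ≫ q i := by
    ext y
    simp [p, q, ModuleCat.hom_sum]
  have hpq (i : Fin m) : e.comp (Ext.mk₀ (p i ≫ q i)) (add_zero n) = 0 := by
    have hu := (IsLocalizedModule.map_units (S := Submonoid.powers (x i))
      (LocalizedModule.mkLinearMap (Submonoid.powers (x i)) M) ⟨x i ^ k, k, rfl⟩)
    have := ext_eq_zero_of_isUnit (N := ModuleCat.of R (LocalizedModule (Submonoid.powers (x i)) M))
      (x i ^ k) (hX _ (Ideal.pow_mem_pow (hx i) k)) hu (e.comp (Ext.mk₀ (p i)) (add_zero n))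
    rw [← Ext.mk₀_comp_mk₀, ← Ext.comp_assoc_of_third_deg_zero, this, Ext.zero_comp]
  rw [← Ext.comp_mk₀_id e, hid, Ext.mk₀_sum, Ext.comp_sum]
  exact Finset.sum_eq_zero fun i _ => hpq i

end Localization

section Grade

open Limits Abelian

/-- A diagram of finitely presented modules, with surjective transition maps, each killed by a power
of the ideal `a`, and having `R ⧸ a` among its terms. -/
structure IsAdicDiagram (a : Ideal R) {D : Type} [SmallCategory D] (F : D ⥤ ModuleCat.{u} R) :
    Prop where
  finitePresentation : ∀ j, Module.FinitePresentation R (F.obj j)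
  exists_pow_smul_eq_zero : ∀ j, ∃ k, ∀ r ∈ a ^ k, ∀ y : F.obj j, r • y = 0
  epi : ∀ {i j : D} (f : i ⟶ j), Epi (F.map f)
  exists_equiv : ∃ j, Nonempty ((R ⧸ a) ≃ₗ[R] F.obj j)

variable {T : Set (ModuleCat.{u} R)} (hT : IsTorsionTheory R T) {a : Ideal R}

include hT in
lemma torsionBySet_mem_of_linearMap_mem {X : Type u} [AddCommGroup X] [Module R X]
    (e : (R ⧸ a) ≃ₗ[R] X) {M : Type u} [AddCommGroup M] [Module R M]
    (h : ModuleCat.of R (X →ₗ[R] M) ∈ T) :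
    ModuleCat.of R (Submodule.torsionBySet R M (a : Set R)) ∈ T := by
  refine hT.mem_of_surjective (LinearMap.codRestrict _
    (LinearMap.applyₗ (e (Submodule.Quotient.mk 1))) fun φ => ?_) (fun y => ?_) h
  · rw [Submodule.mem_torsionBySet_iff]
    rintro ⟨r, hr⟩
    have : r • (Submodule.Quotient.mk 1 : R ⧸ a) = 0 := by
      rw [← Submodule.Quotient.mk_smul, Submodule.Quotient.mk_eq_zero]
      simpa using hr
    change r • φ (e _) = 0
    rw [← map_smul, ← map_smul, this, map_zero, map_zero]
  · have hle : a ≤ LinearMap.ker (LinearMap.toSpanSingleton R M y.1) := fun r hr =>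
      (Submodule.mem_torsionBySet_iff _ _).1 y.2 ⟨r, hr⟩
    refine ⟨a.liftQ _ hle ∘ₗ e.symm.toLinearMap, Subtype.ext ?_⟩
    change a.liftQ _ hle (e.symm (e _)) = y.1
    rw [e.symm_apply_apply, Submodule.liftQ_apply, LinearMap.toSpanSingleton_apply, one_smul]

namespace IsAdicDiagram

variable {D : Type} [SmallCategory D] [IsFiltered Dᵒᵖ] {F : D ⥤ ModuleCat.{u} R}
  (hF : IsAdicDiagram a F)
include hT hF

lemma torsionBySet_mem {M : ModuleCat.{u} R} (h : extColimit F 0 M ∈ T) :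
    ModuleCat.of R (Submodule.torsionBySet R M (a : Set R)) ∈ T := by
  obtain ⟨j, ⟨e⟩⟩ := hF.exists_equiv
  have hj : ModuleCat.of R (Ext.{u} (F.obj j) M 0) ∈ T :=
    hT.mem_of_injective _ (colimit_ι_injective (A := extDiagram F 0 M) (fun f =>
      have := hF.epi f.unop
      Ext.precomp_mk₀_injective_of_epi M (F.map f.unop)) (Opposite.op j)) h
  exact torsionBySet_mem_of_linearMap_mem hT e
    (hT.mem_of_linearEquiv (Ext.linearEquiv₀.trans ModuleCat.homLinearEquiv) hj)

lemma extColimit_mem (hR : IsCoherentRing R) {N : ModuleCat.{u} R} (hN : N ∈ T) (n : ℕ) :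
    extColimit F n N ∈ T :=
  hT.colimit_mem fun j =>
    have := hF.finitePresentation j.unop
    ext_mem_of_finitePresentation hR hT hN n (F.obj j.unop)

lemma extColimit_localizationPi_mem (hne : T.Nonempty) {m : ℕ} {x : Fin m → R}
    (hx : Ideal.span (Set.range x) = a) (M : Type u) [AddCommGroup M] [Module R M] (n : ℕ) :
    extColimit F n (ModuleCat.of R (LocalizationPi x M)) ∈ T :=
  hT.colimit_mem fun j => by
    obtain ⟨k, hk⟩ := hF.exists_pow_smul_eq_zero j.unop
    have : Subsingleton (Ext.{u} (F.obj j.unop) (ModuleCat.of R (LocalizationPi x M)) n) :=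
      subsingleton_of_forall_eq 0
        (ext_localizationPi_eq_zero (fun i => hx ▸ Ideal.subset_span ⟨i, rfl⟩) hk)
    exact hT.mem_of_subsingleton hne

theorem extColimit_mem_of_lt (hR : IsCoherentRing R) {D' : Type} [SmallCategory D']
    [IsFiltered D'ᵒᵖ] {G : D' ⥤ ModuleCat.{u} R} (hG : IsAdicDiagram a G) (ha : a.FG) {n : ℕ}
    (M : ModuleCat.{u} R) (h : ∀ i < n, extColimit F i M ∈ T) :
    ∀ i < n, extColimit G i M ∈ T := by
  induction n generalizing M with
  | zero => exact fun i hi => absurd hi (Nat.not_lt_zero i)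
  | succ n ih =>
    obtain ⟨m, x, hx⟩ := Submodule.fg_iff_exists_fin_generating_family.1 ha
    let f := toLocalizationPi x M
    let S₁ : ShortComplex (ModuleCat.{u} R) := ModuleCat.shortComplexOfCompEqZero
      (LinearMap.ker f).subtype f.rangeRestrict (LinearMap.ext fun y => Subtype.ext y.2)
    let S₂ : ShortComplex (ModuleCat.{u} R) := ModuleCat.shortComplexOfCompEqZero
      (LinearMap.range f).subtype (LinearMap.range f).mkQ (by ext; simp)
    have hS₁ : S₁.ShortExact := ModuleCat.shortComplex_shortExact S₁
      (fun y => Subtype.ext_iff.trans (LinearMap.exact_subtype_ker_map f y))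
      Subtype.val_injective f.surjective_rangeRestrict
    have hS₂ : S₂.ShortExact := ModuleCat.shortComplex_shortExact S₂
      (LinearMap.exact_subtype_mkQ _) Subtype.val_injective (Submodule.mkQ_surjective _)
    have hM := hF.torsionBySet_mem hT (h 0 n.succ_pos)
    have hK : S₁.X₁ ∈ T := ker_toLocalizationPi_mem hT hx hM
    have hE : ∀ i, extColimit G i S₂.X₂ ∈ T :=
      hG.extColimit_localizationPi_mem hT ⟨_, hK⟩ hx M
    have hF₁ : ∀ i < n + 1, extColimit F i S₂.X₁ ∈ T := fun i hi =>
      extColimit_mem_X₃ F hT hS₁ (h i hi) (hF.extColimit_mem hT hR hK (i + 1))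
    have hG₃ : ∀ i < n, extColimit G i S₂.X₃ ∈ T := ih _ fun i hi =>
      extColimit_mem_X₃ F hT hS₂ (hF.extColimit_localizationPi_mem hT ⟨_, hK⟩ hx M i)
        (hF₁ (i + 1) (Nat.succ_lt_succ hi))
    have hG₁ : ∀ i < n + 1, extColimit G i S₂.X₁ ∈ T := by
      rintro (_ | i) hi
      · exact extColimit_zero_mem_X₁ G hT hS₂ (hE 0)
      · exact extColimit_mem_X₁ G hT hS₂ (hG₃ i (Nat.lt_of_succ_lt_succ hi)) (hE (i + 1))
    exact fun i hi => extColimit_mem_X₂ G hT hS₁ (hG.extColimit_mem hT hR hK i) (hG₁ i hi)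

end IsAdicDiagram

section Comparison

/-- The modules `Ext^n(F j, M)` of the two definitions of `Ext` form isomorphic diagrams. -/
def compExtIsoExtDiagram {D : Type} [SmallCategory D] (F : D ⥤ ModuleCat.{u} R) (n : ℕ)
    (M : ModuleCat.{u} R) :
    (F.op ⋙ _root_.Ext R (ModuleCat.{u} R) n) ⋙ (evaluation _ _).obj M ≅
      extDiagram F n M :=
  NatIso.ofComponents
    (fun j => (extLinearEquiv (projectiveResolution (F.obj j.unop)) M n).toModuleIso)
    fun {j k} f => by
      ext x
      exact extLinearEquiv_naturality (projectiveResolution (F.obj j.unop)) M n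
        (projectiveResolution (F.obj k.unop)) (F.map f.unop) x

/-- Local cohomology as the colimit of the modules `Ext^n(R ⧸ a ^ k, M)`. -/
def localCohomologyIso (a : Ideal R) (n : ℕ) (M : ModuleCat.{u} R) :
    (localCohomology a n).obj M ≅
      extColimit (localCohomology.ringModIdeals (localCohomology.idealPowersDiagram a)) n M :=
  colimitObjIsoColimitCompEvaluation
    (localCohomology.diagram (localCohomology.idealPowersDiagram a) n) M ≪≫
    HasColimit.isoOfNatIso (compExtIsoExtDiagram
      (localCohomology.ringModIdeals (localCohomology.idealPowersDiagram a)) n M)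

/-- `Ext^n(X, M)` as a colimit over a one-object category. -/
def extIsoExtColimit (X : ModuleCat.{u} R) (n : ℕ) (M : ModuleCat.{u} R) :
    ((_root_.Ext R (ModuleCat.{u} R) n).obj (Opposite.op X)).obj M ≅
      extColimit (Functor.fromPUnit.{0} X) n M :=
  have : IsIso (colimit.ι (extDiagram (Functor.fromPUnit.{0} X) n M) (Opposite.op ⟨⟨⟩⟩)) :=
    isIso_ι_of_isTerminal (terminalOpOfInitial (IsInitial.ofUniqueHom
      (fun _ => eqToHom (Subsingleton.elim _ _)) fun _ _ => Subsingleton.elim _ _)) _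
  (extLinearEquiv (projectiveResolution X) M n).toModuleIso ≪≫
    @asIso _ _ _ _ _ this

lemma finitePresentation_quotient (ha : a.FG) : Module.FinitePresentation R (R ⧸ a) :=
  Module.finitePresentation_of_surjective a.mkQ a.mkQ_surjective (by rwa [a.ker_mkQ])

lemma isAdicDiagram_fromPUnit (ha : a.FG) :
    IsAdicDiagram a (Functor.fromPUnit.{0} (ModuleCat.of R (R ⧸ a))) where
  finitePresentation _ := finitePresentation_quotient ha
  exists_pow_smul_eq_zero _ := ⟨1, fun r hr y => by
    obtain ⟨y, rfl⟩ := Submodule.Quotient.mk_surjective _ y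
    exact (Submodule.Quotient.mk_eq_zero a).2 (a.mul_mem_right y (pow_one a ▸ hr))⟩
  epi _ := inferInstanceAs (Epi (𝟙 _))
  exists_equiv := ⟨⟨⟨⟩⟩, ⟨LinearEquiv.refl R _⟩⟩

lemma isAdicDiagram_idealPowers (ha : a.FG) :
    IsAdicDiagram a (localCohomology.ringModIdeals (localCohomology.idealPowersDiagram a)) where
  finitePresentation j := finitePresentation_quotient (ha.pow (n := j.unop))
  exists_pow_smul_eq_zero j := ⟨j.unop, fun r hr y => by
    obtain ⟨y, rfl⟩ := Submodule.Quotient.mk_surjective _ y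
    exact (Submodule.Quotient.mk_eq_zero _).2 (Ideal.mul_mem_right y _ hr)⟩
  epi f := (ModuleCat.epi_iff_surjective _).2 fun y => by
    obtain ⟨y, rfl⟩ := Submodule.Quotient.mk_surjective _ y
    exact ⟨Submodule.Quotient.mk y, rfl⟩
  exists_equiv := ⟨Opposite.op 1, ⟨Submodule.quotEquivOfEq _ _ (pow_one a).symm⟩⟩

end Comparison

end Grade

lemma sInf_image_coe_eq {s t : Set ℕ} (h : ∀ n, (∀ i < n, i ∉ s) ↔ ∀ i < n, i ∉ t) :
    sInf ((↑· : ℕ → ℕ∞) '' s) = sInf ((↑· : ℕ → ℕ∞) '' t) := by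
  have key : ∀ {s t : Set ℕ}, (∀ n, (∀ i < n, i ∉ s) → ∀ i < n, i ∉ t) →
      sInf ((↑· : ℕ → ℕ∞) '' s) ≤ sInf ((↑· : ℕ → ℕ∞) '' t) := by
    intro s t h
    refine le_sInf ?_
    rintro _ ⟨i, hi, rfl⟩
    by_contra! hlt
    refine h (i + 1) (fun k hk hks => ?_) i i.lt_succ_self hi
    exact (hlt.trans_le (sInf_le ⟨k, hks, rfl⟩)).not_ge
      (Nat.cast_le.2 (Nat.lt_succ_iff.1 hk))
  exact le_antisymm (key fun n => (h n).1) (key fun n => (h n).2)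

/-- **Theorem (Ext grade = local cohomology grade over coherent rings).** Let `R` be a
coherent commutative ring, `𝔗` a torsion theory of `R`-modules, `𝔞` a finitely generated
ideal of `R` and `M` an `R`-module. Then `𝔗-Egrade_R(𝔞, M) = 𝔗-Hgrade_R(𝔞, M)`. -/
theorem tEgrade_eq_tHgrade (hR : IsCoherentRing R) (T : Set (ModuleCat.{u} R))
    (hT : IsTorsionTheory R T) (a : Ideal R) (ha : a.FG)
    (M : Type u) [AddCommGroup M] [Module R M] :
    TEgrade T a M = THgrade T a M := by
  have hE := isAdicDiagram_fromPUnit ha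
  have hH := isAdicDiagram_idealPowers ha
  have hE_iff (i : ℕ) := (⟨hT.mem_of_iso (extIsoExtColimit (ModuleCat.of R (R ⧸ a)) i
    (ModuleCat.of R M)), hT.mem_of_iso (extIsoExtColimit _ i _).symm⟩ : _ ↔ _)
  have hH_iff (i : ℕ) := (⟨hT.mem_of_iso (localCohomologyIso a i (ModuleCat.of R M)),
    hT.mem_of_iso (localCohomologyIso a i _).symm⟩ : _ ↔ _)
  refine sInf_image_coe_eq fun n => ?_
  simp only [Set.mem_ofPred_eq, not_not, hE_iff, hH_iff]
  exact ⟨hE.extColimit_mem_of_lt hT hR hH ha _, hH.extColimit_mem_of_lt hT hR hE ha _⟩
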